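/- arXiv:2206.01342 — 9 statements merged into one kernel-verified Lean document; each statement's English description precedes it below -/
import Mathlib

section
/- Let u_1, …, u_M be an orthonormal family in ℝ^d, and let y be a random variable on a finite probability space taking values in {1, …, M} with P[y = m'] = p_{m'}. Define the random vector X := u_y. Fix an index m and define the gated vector g := X · 1{⟨u_m, X⟩ > 0}. Then the covariance matrix of g equals p_m (1 − p_m) · u_m u_mᵀ. Consequently, if 0 < p_m < 1, then u_m is an eigenvector of this covariance matrix attaining its (distinct) maximal eigenvalue p_m(1 − p_m). -/
open Matrix Finset
open scoped Classical

/-- Expectation of a random vector on a finite probability space with weights `P`. -/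
noncomputable def expecVec {Ω ι : Type*} [Fintype Ω] [Fintype ι] (P : Ω → ℝ)
    (h : Ω → ι → ℝ) : ι → ℝ :=
  ∑ ω, P ω • h ω

/-- Covariance matrix `E[h hᵀ] − E[h] E[h]ᵀ` of a random vector on a finite probability
space with weights `P`. -/
noncomputable def covMat {Ω ι : Type*} [Fintype Ω] [Fintype ι] (P : Ω → ℝ)
    (h : Ω → ι → ℝ) : Matrix ι ι ℝ :=
  (∑ ω, P ω • vecMulVec (h ω) (h ω)) - vecMulVec (expecVec P h) (expecVec P h)

/-- latent categorical model. For `X = u_y` with `y` categorical and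
`g = X · 1{⟨u_m, X⟩ > 0}`, the covariance matrix of `g` equals `p_m (1 − p_m) u_m u_mᵀ`;
if `0 < p_m < 1`, then `u_m` is an eigenvector attaining the distinct maximal eigenvalue
`p_m (1 − p_m)`. -/
theorem stmt2 {Ω : Type*} [Fintype Ω] {d M : ℕ}
    (u : Fin M → Fin d → ℝ)
    (hu : ∀ m m', u m ⬝ᵥ u m' = if m = m' then (1 : ℝ) else 0)
    (P : Ω → ℝ) (hP : ∀ ω, 0 ≤ P ω) (hPsum : ∑ ω : Ω, P ω = 1)
    (y : Ω → Fin M) (p : Fin M → ℝ)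
    (hp : ∀ m', p m' = ∑ ω, if y ω = m' then P ω else 0)
    (m : Fin M) :
    let X : Ω → Fin d → ℝ := fun ω => u (y ω)
    let g : Ω → Fin d → ℝ := fun ω => if 0 < u m ⬝ᵥ X ω then X ω else 0
    covMat P g = (p m * (1 - p m)) • vecMulVec (u m) (u m) ∧
      (0 < p m → p m < 1 →
        (covMat P g).mulVec (u m) = (p m * (1 - p m)) • u m ∧
        (∀ (μ : ℝ) (v : Fin d → ℝ), v ≠ 0 → (covMat P g).mulVec v = μ • v →
          μ ≤ p m * (1 - p m)) ∧
        (∀ v : Fin d → ℝ, (covMat P g).mulVec v = (p m * (1 - p m)) • v →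
          ∃ t : ℝ, v = t • u m)) := by
  intro X g
  have hg : ∀ ω, g ω = if y ω = m then u m else 0 := by
    intro ω
    simp only [g, X, hu]
    by_cases h : y ω = m
    · simp [h]
    · have h' : ¬ m = y ω := fun e => h e.symm
      simp [h, h']
  have huu : u m ⬝ᵥ u m = 1 := by simp [hu]
  have hE : expecVec P g = p m • u m := by
    unfold expecVec
    rw [hp, Finset.sum_smul]
    refine Finset.sum_congr rfl fun ω _ => ?_
    rw [hg]
    split_ifs <;> simp
  have hS : (∑ ω, P ω • vecMulVec (g ω) (g ω)) = p m • vecMulVec (u m) (u m) := by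
    rw [hp, Finset.sum_smul]
    refine Finset.sum_congr rfl fun ω _ => ?_
    rw [hg]
    split_ifs <;> simp
  have hC : covMat P g = (p m * (1 - p m)) • vecMulVec (u m) (u m) := by
    unfold covMat
    rw [hS, hE]
    ext i j
    simp [vecMulVec_apply]
    ring
  have hmul : ∀ v, (covMat P g).mulVec v = (p m * (1 - p m) * (u m ⬝ᵥ v)) • u m := by
    intro v
    rw [hC, smul_mulVec, vecMulVec_mulVec]
    ext i
    simp
    ring
  refine ⟨hC, fun h0 h1 => ?_⟩
  have hpos : 0 < p m * (1 - p m) := mul_pos h0 (by linarith)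
  refine ⟨by rw [hmul, huu, mul_one], fun μ v hv h => ?_, fun v h => ⟨u m ⬝ᵥ v, ?_⟩⟩
  · rw [hmul] at h
    by_cases hc : u m ⬝ᵥ v = 0
    · rw [hc, mul_zero, zero_smul] at h
      rcases smul_eq_zero.mp h.symm with h | h
      · rw [h]; exact hpos.le
      · exact absurd h hv
    · have h2 := congrArg (fun w => u m ⬝ᵥ w) h
      simp only [dotProduct_smul, huu, smul_eq_mul, mul_one] at h2
      exact (mul_right_cancel₀ hc h2).ge
  · rw [hmul, mul_smul] at h
    exact (smul_right_injective _ hpos.ne' h).symm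
end

section
/- Let u_1, …, u_d be an orthonormal basis of ℝ^d, and let y_1, …, y_d be independent random variables on a finite probability space where y_{m'} takes the value √((1 − q_{m'})/q_{m'}) with probability q_{m'} and the value −√(q_{m'}/(1 − q_{m'})) with probability 1 − q_{m'}, with 0 < q_{m'} < 1 (so E[y_{m'}] = 0 and E[y_{m'}²] = 1). Define X := Σ_{m'} y_{m'} u_{m'}. Fix an index m and define the gated vector g := X · 1{y_m > 0}. Then the covariance matrix of g equals (1 − q_m)² u_m u_mᵀ + q_m (I − u_m u_mᵀ). -/
open Matrix Finset
open scoped Classical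

theorem aux_single {Ω : Type*} [Fintype Ω] (P : Ω → ℝ) (hPsum : ∑ ω : Ω, P ω = 1)
    (a b q : ℝ) (y : Ω → ℝ) (hval : ∀ ω, y ω = a ∨ y ω = b)
    (hprob : (∑ ω, if y ω = a then P ω else 0) = q) (f : ℝ → ℝ) :
    ∑ ω, P ω * f (y ω) = q * f a + (1 - q) * f b := by
  have h : ∀ ω, P ω * f (y ω) = (if y ω = a then P ω else 0) * f a
      + (P ω - (if y ω = a then P ω else 0)) * f b := by
    intro ω
    by_cases h : y ω = a
    · simp [h]
    · have := (hval ω).resolve_left h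
      rw [if_neg h, this]; ring
  rw [Finset.sum_congr rfl (fun ω _ => h ω), Finset.sum_add_distrib, ← Finset.sum_mul,
    ← Finset.sum_mul, Finset.sum_sub_distrib, hprob, hPsum]

theorem aux_prod {Ω : Type*} [Fintype Ω] {d : ℕ} (P : Ω → ℝ)
    (a b : Fin d → ℝ) (y : Fin d → Ω → ℝ)
    (hval : ∀ m' ω, y m' ω = a m' ∨ y m' ω = b m')
    (hindep : ∀ v : Fin d → ℝ,
      (∑ ω, if (∀ m', y m' ω = v m') then P ω else 0) =
        ∏ m', ∑ ω, if y m' ω = v m' then P ω else 0)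
    (f : Fin d → ℝ → ℝ) :
    ∑ ω, P ω * ∏ i, f i (y i ω) = ∏ i, ∑ ω, P ω * f i (y i ω) := by
  have h1 : ∀ i, ∑ ω, P ω * f i (y i ω) =
      ∑ x ∈ ({a i, b i} : Finset ℝ), f i x * ∑ ω, if y i ω = x then P ω else 0 := by
    intro i
    simp_rw [Finset.mul_sum]
    rw [Finset.sum_comm]
    refine Finset.sum_congr rfl fun ω _ => ?_
    have hm : y i ω ∈ ({a i, b i} : Finset ℝ) := by
      simpa using hval i ω
    rw [Finset.sum_eq_single_of_mem _ hm]
    · simp [mul_comm]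
    · intro x _ hx
      simp [hx.symm]
  rw [Finset.prod_congr rfl (fun i _ => h1 i), Finset.prod_univ_sum]
  simp_rw [Finset.prod_mul_distrib, ← hindep, Finset.mul_sum]
  rw [Finset.sum_comm]
  refine Finset.sum_congr rfl fun ω _ => ?_
  have hm : (fun i => y i ω) ∈ Fintype.piFinset (fun i => ({a i, b i} : Finset ℝ)) := by
    rw [Fintype.mem_piFinset]
    intro i
    simpa using hval i ω
  rw [Finset.sum_eq_single_of_mem _ hm]
  · simp [mul_comm]
  · intro x _ hx
    have : ¬ ∀ i, y i ω = x i := fun h => hx (funext fun i => (h i).symm)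
    rw [if_neg this, mul_zero]

/-- latent summation model. For `X = Σ_{m'} y_{m'} u_{m'}` with
independent standardized Bernoulli `y_{m'}` and `g = X · 1{y_m > 0}`, the covariance
matrix of `g` equals `(1 − q_m)² u_m u_mᵀ + q_m (I − u_m u_mᵀ)`. -/
theorem stmt3 {Ω : Type*} [Fintype Ω] {d : ℕ}
    (u : Fin d → Fin d → ℝ)
    (hu : ∀ m m', u m ⬝ᵥ u m' = if m = m' then (1 : ℝ) else 0)
    (P : Ω → ℝ) (hP : ∀ ω, 0 ≤ P ω) (hPsum : ∑ ω : Ω, P ω = 1)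
    (q : Fin d → ℝ) (hq0 : ∀ m', 0 < q m') (hq1 : ∀ m', q m' < 1)
    (y : Fin d → Ω → ℝ)
    (hval : ∀ m' ω, y m' ω = Real.sqrt ((1 - q m') / q m') ∨
      y m' ω = -Real.sqrt (q m' / (1 - q m')))
    (hprob : ∀ m', (∑ ω, if y m' ω = Real.sqrt ((1 - q m') / q m') then P ω else 0) = q m')
    (hindep : ∀ v : Fin d → ℝ,
      (∑ ω, if (∀ m', y m' ω = v m') then P ω else 0) =
        ∏ m', ∑ ω, if y m' ω = v m' then P ω else 0)
    (m : Fin d) :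
    let X : Ω → Fin d → ℝ := fun ω => ∑ m', y m' ω • u m'
    let g : Ω → Fin d → ℝ := fun ω => if 0 < y m ω then X ω else 0
    covMat P g = ((1 - q m) ^ 2) • vecMulVec (u m) (u m) +
      q m • ((1 : Matrix (Fin d) (Fin d) ℝ) - vecMulVec (u m) (u m)) := by
  intro X g
  set a : Fin d → ℝ := fun i => Real.sqrt ((1 - q i) / q i) with ha
  set b : Fin d → ℝ := fun i => -Real.sqrt (q i / (1 - q i)) with hb
  have hq1' : ∀ i, 0 < 1 - q i := fun i => by linarith [hq1 i]
  have hapos : ∀ i, 0 < a i := fun i => Real.sqrt_pos.2 (div_pos (hq1' i) (hq0 i))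
  have hbneg : ∀ i, b i ≤ 0 := fun i => neg_nonpos.2 (Real.sqrt_nonneg _)
  have ha2 : ∀ i, q i * (a i * a i) = 1 - q i := fun i => by
    rw [ha]
    simp only
    rw [Real.mul_self_sqrt (div_pos (hq1' i) (hq0 i)).le]
    field_simp [(hq0 i).ne']
  have hb2 : ∀ i, (1 - q i) * (b i * b i) = q i := fun i => by
    rw [hb]
    simp only
    rw [neg_mul_neg, Real.mul_self_sqrt (div_pos (hq0 i) (hq1' i)).le]
    have := (hq1' i).ne'
    field_simp
  have hmean : ∀ i, q i * a i + (1 - q i) * b i = 0 := fun i => by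
    have h1 : (q i * a i) ^ 2 = ((1 - q i) * -b i) ^ 2 := by
      linear_combination q i * ha2 i - (1 - q i) * hb2 i
    have h2 := (sq_eq_sq₀ (mul_nonneg (hq0 i).le (hapos i).le)
      (mul_nonneg (hq1' i).le (neg_nonneg.2 (hbneg i)))).1 h1
    linarith
  have hs : ∀ i (f : ℝ → ℝ), ∑ ω, P ω * f (y i ω) = q i * f (a i) + (1 - q i) * f (b i) :=
    fun i f => aux_single P hPsum (a i) (b i) (q i) (y i) (hval i) (hprob i) f
  have hp := aux_prod P a b y hval hindep
  -- indicator
  set I : ℝ → ℝ := fun x => if 0 < x then 1 else 0 with hI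
  have hIa : ∀ i, I (a i) = 1 := fun i => if_pos (hapos i)
  have hIb : ∀ i, I (b i) = 0 := fun i => if_neg (not_lt.2 (hbneg i))
  have zero : ∀ k, k ≠ m → ∀ j, j ≠ k → ∑ ω, P ω * (I (y m ω) * (y j ω * y k ω)) = 0 := by
    intro k hkm j hjk
    have := hp (fun i x => (if i = m then I x else 1) * ((if i = j then x else 1) *
      (if i = k then x else 1)))
    simp only [Finset.prod_mul_distrib, Finset.prod_ite_eq', Finset.mem_univ, if_true] at this
    rw [this]
    apply Finset.prod_eq_zero (Finset.mem_univ k)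
    have h0 := hs k (fun x => x)
    rw [hmean] at h0
    simpa [hkm, hjk.symm] using h0
  have e0 : ∀ k, k ≠ m → ∑ ω, P ω * (I (y m ω) * y k ω) = 0 := by
    intro k hkm
    have := hp (fun i x => (if i = m then I x else 1) * (if i = k then x else 1))
    simp only [Finset.prod_mul_distrib, Finset.prod_ite_eq', Finset.mem_univ, if_true] at this
    rw [this]
    apply Finset.prod_eq_zero (Finset.mem_univ k)
    have h0 := hs k (fun x => x)
    rw [hmean] at h0
    simpa [hkm] using h0
  have em : ∑ ω, P ω * (I (y m ω) * y m ω) = q m * a m := by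
    rw [hs m (fun x => I x * x), hIa, hIb]; ring
  have cm : ∑ ω, P ω * (I (y m ω) * (y m ω * y m ω)) = 1 - q m := by
    rw [hs m (fun x => I x * (x * x)), hIa, hIb, ← ha2]; ring
  have cj : ∀ j, j ≠ m → ∑ ω, P ω * (I (y m ω) * (y j ω * y j ω)) = q m := by
    intro j hj
    have := hp (fun i x => (if i = m then I x else 1) * (if i = j then x * x else 1))
    simp only [Finset.prod_mul_distrib, Finset.prod_ite_eq', Finset.mem_univ, if_true] at this
    rw [this, Finset.prod_eq_single m]
    · rw [hs m (fun x => (if m = m then I x else 1) * (if m = j then x * x else 1))]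
      simp [hj.symm, hIa, hIb]
    · intro i _ him
      rw [hs i (fun x => (if i = m then I x else 1) * (if i = j then x * x else 1))]
      by_cases hij : i = j
      · simp only [if_neg him, if_pos hij, one_mul, ha2, hb2]; ring
      · simp [him, hij]
    · simp
  have c : ∀ j k, ∑ ω, P ω * (I (y m ω) * (y j ω * y k ω)) =
      if j = k then (q m + if j = m then 1 - 2 * q m else 0) else 0 := by
    intro j k
    by_cases hjk : j = k
    · subst hjk
      by_cases hj : j = m
      · subst hj
        rw [cm]; simp; ring
      · rw [cj j hj]; simp [hj]
    · rw [if_neg hjk]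
      by_cases hk : k = m
      · have hj : j ≠ m := fun h => hjk (h.trans hk.symm)
        rw [← zero j hj k (Ne.symm hjk)]
        exact Finset.sum_congr rfl fun ω _ => by ring
      · exact zero k hk j hjk
  have e : ∀ j, ∑ ω, P ω * (I (y m ω) * y j ω) = if j = m then q m * a m else 0 := by
    intro j
    by_cases hj : j = m
    · subst hj; simpa using em
    · rw [if_neg hj, e0 j hj]
  -- completeness
  have hU : (Matrix.of u) * (Matrix.of u)ᵀ = 1 := by
    ext i j
    rw [Matrix.mul_apply, Matrix.one_apply]
    exact hu i j
  have hU' := mul_eq_one_comm.1 hU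
  have hcomp : ∀ s t, ∑ j, u j s * u j t = (1 : Matrix (Fin d) (Fin d) ℝ) s t := by
    intro s t
    rw [← hU', Matrix.mul_apply]
    rfl
  have hg : ∀ ω s, g ω s = ∑ j, I (y m ω) * y j ω * u j s := by
    intro ω s
    by_cases h : 0 < y m ω
    · simp [g, X, hI, h, Finset.sum_apply]
    · simp [g, hI, h]
  have hI2 : ∀ x, I x * I x = I x := fun x => by
    by_cases h : 0 < x <;> simp [hI, h]
  have hE : ∀ s, expecVec P g s = q m * a m * u m s := by
    intro s
    have : expecVec P g s = ∑ j, (∑ ω, P ω * (I (y m ω) * y j ω)) * u j s := by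
      simp only [expecVec, Finset.sum_apply, Pi.smul_apply, smul_eq_mul, hg, Finset.mul_sum,
        Finset.sum_mul]
      rw [Finset.sum_comm]
      exact Finset.sum_congr rfl fun j _ => Finset.sum_congr rfl fun ω _ => by ring
    rw [this]
    simp [e]
  ext s t
  have hS : ∑ ω, P ω * (g ω s * g ω t) = q m * (1 : Matrix (Fin d) (Fin d) ℝ) s t
      + (1 - 2 * q m) * (u m s * u m t) := by
    have : ∑ ω, P ω * (g ω s * g ω t) =
        ∑ j, ∑ k, (∑ ω, P ω * (I (y m ω) * (y j ω * y k ω))) * (u j s * u k t) := by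
      simp only [hg, Finset.sum_mul_sum]
      simp only [Finset.mul_sum, Finset.sum_mul]
      rw [Finset.sum_comm]
      refine Finset.sum_congr rfl fun j _ => ?_
      rw [Finset.sum_comm]
      refine Finset.sum_congr rfl fun k _ => Finset.sum_congr rfl fun ω _ => ?_
      linear_combination (P ω * (y j ω * y k ω) * (u j s * u k t)) * hI2 (y m ω)
    rw [this]
    simp only [c, ite_mul, zero_mul, Finset.sum_ite_eq, Finset.mem_univ, if_true, add_mul,
      Finset.sum_add_distrib, Finset.sum_ite_eq', ← Finset.mul_sum, hcomp]
  simp only [covMat, Matrix.sub_apply, Matrix.add_apply, Matrix.smul_apply, Matrix.sum_apply,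
    Matrix.vecMulVec_apply, smul_eq_mul, hS, hE]
  linear_combination (-(q m * (u m s * u m t))) * ha2 m
end

section
/- Let d ≥ 2 and let A be a map from ℝ^d to symmetric d×d matrices satisfying the Lipschitz condition ‖A(w') − A(w)‖₂ ≤ L ‖w' − w‖₂ for all unit vectors w, w' (operator norm on the left). Suppose w* is a unit vector with A(w*) w* = λ₁ w*, where λ₁ is the largest eigenvalue of A(w*), let λ₂ be the second-largest eigenvalue of A(w*), and suppose λ_gap := λ₁ − λ₂ > L. Then: (1) P⊥_{w*} A(w*) w* = 0, i.e., w* is a critical point of the dynamics ẇ = P⊥_w A(w) w; (2) there exist constants C > 0 and ε₀ > 0 such that for every unit vector u with ⟨u, w*⟩ = 0 and every ε ∈ (0, ε₀), setting v := √(1 − ε²) w* + ε u (a unit vector), one has ⟨u, P⊥_v A(v) v⟩ ≤ −(λ_gap − L) ε + C ε²; in particular ⟨u, P⊥_v A(v) v⟩ < 0 for all sufficiently small ε > 0, so the critical point w* is stable. -/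
open Matrix Finset

/-- Euclidean norm of a vector in `ℝ^d` given by the dot product. -/
noncomputable def euclNorm {d : ℕ} (v : Fin d → ℝ) : ℝ := Real.sqrt (v ⬝ᵥ v)

theorem cs_aux {d : ℕ} (t y : Fin d → ℝ) (ht : t ⬝ᵥ t = 1) : t ⬝ᵥ y ≤ euclNorm y := by
  have h := Real.sum_mul_le_sqrt_mul_sqrt Finset.univ t y
  have e1 : ∑ i, t i ^ 2 = 1 := by
    rw [← ht]; simp [dotProduct, sq]
  have e2 : ∑ i, y i ^ 2 = y ⬝ᵥ y := by simp [dotProduct, sq]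
  rw [e1, e2] at h
  simpa [euclNorm, dotProduct] using h

theorem key_aux {d : ℕ} (L : ℝ) (hL : 0 ≤ L)
    (B D : Matrix (Fin d) (Fin d) ℝ) (hB : B.IsSymm)
    (w u : Fin d → ℝ) (lam1 lam2 s ε : ℝ) (hs : 0 ≤ s) (hs1 : s ^ 2 = 1 - ε ^ 2) (hε : 0 < ε)
    (hw : w ⬝ᵥ w = 1) (hu : u ⬝ᵥ u = 1) (huw : u ⬝ᵥ w = 0)
    (heig : B.mulVec w = lam1 • w)
    (h2 : u ⬝ᵥ B.mulVec u ≤ lam2)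
    (hD : euclNorm ((D - B).mulVec (s • w + ε • u)) ≤
      L * euclNorm (s • w + ε • u - w) * euclNorm (s • w + ε • u)) :
    u ⬝ᵥ (((1 : Matrix (Fin d) (Fin d) ℝ) -
      vecMulVec (s • w + ε • u) (s • w + ε • u)).mulVec (D.mulVec (s • w + ε • u))) ≤
      -((lam1 - lam2) - L) * ε + (lam1 - lam2) * ε ^ 3 := by
  have hwu : w ⬝ᵥ u = 0 := by rw [dotProduct_comm]; exact huw
  have hwBu : w ⬝ᵥ B.mulVec u = 0 := by
    rw [dotProduct_mulVec, ← mulVec_transpose, hB.eq, heig, smul_dotProduct, hwu]; simp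
  have hvv : euclNorm (s • w + ε • u) = 1 := by
    have : (s • w + ε • u) ⬝ᵥ (s • w + ε • u) = 1 := by
      simp [hw, hu, huw, hwu]; linarith
    simp [euclNorm, this]
  have hdist : s * euclNorm (s • w + ε • u - w) ≤ ε := by
    have : (s • w + ε • u - w) ⬝ᵥ (s • w + ε • u - w) = 2 - 2 * s := by
      simp [hw, hu, huw, hwu]; linarith
    rw [euclNorm, this]
    have hs2 : s ≤ 1 := by nlinarith
    apply abs_le_of_sq_le_sq' _ hε.le |>.2
    rw [mul_pow, Real.sq_sqrt (by linarith)]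
    nlinarith [mul_nonneg (sq_nonneg (1 - s)) (by linarith : 0 ≤ 1 + 2 * s)]
  have htt : (s • u - ε • w) ⬝ᵥ (s • u - ε • w) = 1 := by
    simp [hw, hu, huw, hwu]; linarith
  have hcs := cs_aux _ ((D - B).mulVec (s • w + ε • u)) htt
  rw [hvv, mul_one] at hD
  have hbt : (s • u - ε • w) ⬝ᵥ B.mulVec (s • w + ε • u) =
      - (s * ε * lam1) + s * ε * (u ⬝ᵥ B.mulVec u) := by
    simp [mulVec_add, mulVec_smul, heig, hw, huw, hwBu]; ring
  have hexp : u ⬝ᵥ (((1 : Matrix (Fin d) (Fin d) ℝ) -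
      vecMulVec (s • w + ε • u) (s • w + ε • u)).mulVec (D.mulVec (s • w + ε • u))) =
      s * ((s • u - ε • w) ⬝ᵥ ((D - B).mulVec (s • w + ε • u)) +
        (s • u - ε • w) ⬝ᵥ B.mulVec (s • w + ε • u)) := by
    rw [← dotProduct_add, ← add_mulVec, sub_add_cancel]
    generalize D.mulVec (s • w + ε • u) = y
    rw [sub_mulVec, one_mulVec, vecMulVec_mulVec]
    simp [hu, huw]
    linear_combination (-(u ⬝ᵥ y)) * hs1
  rw [hexp, hbt]
  have h3 : s * ((s • u - ε • w) ⬝ᵥ ((D - B).mulVec (s • w + ε • u))) ≤ L * ε := by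
    calc _ ≤ s * (L * euclNorm (s • w + ε • u - w)) :=
          mul_le_mul_of_nonneg_left (hcs.trans hD) hs
      _ = L * (s * euclNorm (s • w + ε • u - w)) := by ring
      _ ≤ L * ε := mul_le_mul_of_nonneg_left hdist hL
  have h4 : s ^ 2 * ε * (u ⬝ᵥ B.mulVec u) ≤ s ^ 2 * ε * lam2 :=
    mul_le_mul_of_nonneg_left h2 (by positivity)
  have h5 : s ^ 2 * ε * (lam2 - lam1) = (1 - ε ^ 2) * ε * (lam2 - lam1) := by rw [hs1]
  nlinarith

/-- local stability of `w*` for the dynamics `ẇ = P⊥_w A(w) w`.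
If `A` is symmetric-matrix valued and `L`-Lipschitz (in operator norm) on the unit
sphere, `w*` is a unit eigenvector of `A(w*)` for its largest eigenvalue `λ₁`, and the
eigenvalue gap `λ₁ − λ₂` exceeds `L`, then `w*` is a critical point, and perturbations
`v = √(1−ε²) w* + ε u` satisfy `⟨u, P⊥_v A(v) v⟩ ≤ −(λ_gap − L) ε + C ε²`, which is
negative for all sufficiently small `ε > 0`: the critical point is stable. -/
theorem stmt5 {d : ℕ} (hd : 2 ≤ d) (L : ℝ)
    (A : (Fin d → ℝ) → Matrix (Fin d) (Fin d) ℝ)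
    (hsymm : ∀ w, (A w).IsSymm)
    (hLip : ∀ w w' : Fin d → ℝ, w ⬝ᵥ w = 1 → w' ⬝ᵥ w' = 1 →
      ∀ v : Fin d → ℝ, euclNorm ((A w' - A w).mulVec v) ≤ L * euclNorm (w' - w) * euclNorm v)
    (wstar : Fin d → ℝ) (hwstar : wstar ⬝ᵥ wstar = 1)
    (lam1 lam2 : ℝ)
    (heig : (A wstar).mulVec wstar = lam1 • wstar)
    (hmax : ∀ (μ : ℝ) (v : Fin d → ℝ), v ≠ 0 → (A wstar).mulVec v = μ • v → μ ≤ lam1)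
    (hlam2 : ∀ v : Fin d → ℝ, v ⬝ᵥ wstar = 0 →
      v ⬝ᵥ (A wstar).mulVec v ≤ lam2 * (v ⬝ᵥ v))
    (hlam2attained : ∃ v : Fin d → ℝ, v ≠ 0 ∧ v ⬝ᵥ wstar = 0 ∧
      (A wstar).mulVec v = lam2 • v)
    (hgap : L < lam1 - lam2) :
    -- (1) `w*` is a critical point
    ((1 : Matrix (Fin d) (Fin d) ℝ) - vecMulVec wstar wstar).mulVec
        ((A wstar).mulVec wstar) = 0 ∧
    -- (2) quantitative stability of perturbations
    (∃ C ε₀ : ℝ, 0 < C ∧ 0 < ε₀ ∧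
      ∀ (u : Fin d → ℝ) (ε : ℝ), u ⬝ᵥ u = 1 → u ⬝ᵥ wstar = 0 → 0 < ε → ε < ε₀ →
        let v : Fin d → ℝ := Real.sqrt (1 - ε ^ 2) • wstar + ε • u
        u ⬝ᵥ (((1 : Matrix (Fin d) (Fin d) ℝ) - vecMulVec v v).mulVec ((A v).mulVec v)) ≤
          -((lam1 - lam2) - L) * ε + C * ε ^ 2) ∧
    -- in particular, negativity for all sufficiently small ε > 0
    (∃ ε₁ : ℝ, 0 < ε₁ ∧
      ∀ (u : Fin d → ℝ) (ε : ℝ), u ⬝ᵥ u = 1 → u ⬝ᵥ wstar = 0 → 0 < ε → ε < ε₁ →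
        let v : Fin d → ℝ := Real.sqrt (1 - ε ^ 2) • wstar + ε • u
        u ⬝ᵥ (((1 : Matrix (Fin d) (Fin d) ℝ) - vecMulVec v v).mulVec ((A v).mulVec v)) < 0) := by
  have hL : 0 ≤ L := by
    have h := hLip wstar (-wstar) hwstar (by simpa using hwstar) wstar
    have e1 : euclNorm wstar = 1 := by simp [euclNorm, hwstar]
    have e2 : 0 < euclNorm (-wstar - wstar) := by
      apply Real.sqrt_pos.2
      simp [hwstar]; norm_num
    rw [e1, mul_one] at h
    have h0 : 0 ≤ L * euclNorm (-wstar - wstar) := le_trans (Real.sqrt_nonneg _) h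
    exact nonneg_of_mul_nonneg_left h0 e2
  have hmain : ∀ (u : Fin d → ℝ) (ε : ℝ), u ⬝ᵥ u = 1 → u ⬝ᵥ wstar = 0 → 0 < ε → ε < 1 →
        let v : Fin d → ℝ := Real.sqrt (1 - ε ^ 2) • wstar + ε • u
        u ⬝ᵥ (((1 : Matrix (Fin d) (Fin d) ℝ) - vecMulVec v v).mulVec ((A v).mulVec v)) ≤
          -((lam1 - lam2) - L) * ε + (lam1 - lam2) * ε ^ 2 := by
    intro u ε hu huw hε hε1 v
    have hs1 : Real.sqrt (1 - ε ^ 2) ^ 2 = 1 - ε ^ 2 := Real.sq_sqrt (by nlinarith)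
    have hwu : wstar ⬝ᵥ u = 0 := by rw [dotProduct_comm]; exact huw
    have hv : v ⬝ᵥ v = 1 := by
      simp only [v]
      generalize Real.sqrt (1 - ε ^ 2) = s at hs1
      simp [hwstar, hu, huw, hwu]; linarith
    have h2 := hlam2 u huw
    rw [hu, mul_one] at h2
    have h := key_aux L hL (A wstar) (A v) (hsymm _) wstar u lam1 lam2 _ ε
      (Real.sqrt_nonneg (1 - ε ^ 2)) hs1 hε hwstar hu huw heig h2 (hLip wstar v hwstar hv v)
    refine h.trans ?_
    have : ε ^ 3 ≤ ε ^ 2 := by nlinarith [sq_nonneg ε]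
    have := mul_le_mul_of_nonneg_left this (by linarith : 0 ≤ lam1 - lam2)
    linarith
  have hg : 0 < lam1 - lam2 := by linarith
  refine ⟨?_, ⟨lam1 - lam2, 1, hg, one_pos, hmain⟩,
    ⟨min 1 ((lam1 - lam2 - L) / (lam1 - lam2)),
      lt_min one_pos (div_pos (by linarith) hg), ?_⟩⟩
  · rw [heig, sub_mulVec, one_mulVec, vecMulVec_mulVec]
    simp [hwstar]
  · intro u ε hu huw hε hε1 v
    refine lt_of_le_of_lt (hmain u ε hu huw hε (hε1.trans_le (min_le_left _ _))) ?_
    have h := (lt_div_iff₀ hg).1 (hε1.trans_le (min_le_right _ _))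
    nlinarith
end

section
/- Let A be a symmetric positive definite d×d matrix with eigenvalues λ₁ ≥ λ₂ ≥ … ≥ λ_d > 0 and let φ₁ be a unit eigenvector of A for λ₁. Let w be a unit vector with c := ⟨φ₁, w⟩ > 0, and define μ := ((1 + c)/(2c²)) · (λ₂/λ₁)². Then, letting d' := ⟨φ₁, A w / ‖A w‖₂⟩ (the inner product of φ₁ with the power-iteration update of w), one has 1 − d' ≤ μ (1 − c). -/
open Matrix Finset

theorem parseval_aux {d : ℕ} (φ : Fin d → Fin d → ℝ)
    (hortho : ∀ i j, φ i ⬝ᵥ φ j = if i = j then (1 : ℝ) else 0) (v : Fin d → ℝ) :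
    v ⬝ᵥ v = ∑ i, (φ i ⬝ᵥ v) ^ 2 := by
  have h1 : Matrix.of φ * (Matrix.of φ)ᵀ = 1 := by
    ext i j
    rw [Matrix.one_apply, ← hortho i j]
    rfl
  have h2 : (Matrix.of φ)ᵀ * Matrix.of φ = 1 := mul_eq_one_comm.mp h1
  have h3 : ∑ i, (φ i ⬝ᵥ v) ^ 2 = (Matrix.of φ *ᵥ v) ⬝ᵥ (Matrix.of φ *ᵥ v) := by
    simp only [dotProduct, Matrix.mulVec, Matrix.of_apply, sq]
  rw [h3, Matrix.dotProduct_mulVec, ← Matrix.mulVec_transpose, Matrix.mulVec_mulVec, h2,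
    Matrix.one_mulVec]

theorem scalar_aux (a N : ℝ) (ha : 0 < a) (hN : 0 < N) :
    1 - a / N ≤ (N ^ 2 - a ^ 2) / (2 * a ^ 2) := by
  have h : (N ^ 2 - a ^ 2) / (2 * a ^ 2) - (1 - a / N)
      = (N - a) ^ 2 * (N + 2 * a) / (2 * a ^ 2 * N) := by
    field_simp
    ring
  have : 0 ≤ (N - a) ^ 2 * (N + 2 * a) / (2 * a ^ 2 * N) := by positivity
  linarith

/-- bound on the alignment of one power-iteration step. Let `A` be
symmetric positive definite with orthonormal eigenbasis `φ` and decreasing eigenvalues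
`λ`, let `w` be a unit vector with `c = ⟨φ₁, w⟩ > 0`, and
`μ = ((1+c)/(2c²))(λ₂/λ₁)²`. Then the power-iteration update `A w / ‖A w‖₂` satisfies
`1 − ⟨φ₁, A w / ‖A w‖₂⟩ ≤ μ (1 − c)`. -/
theorem stmt6 {d : ℕ} (hd : 2 ≤ d)
    (A : Matrix (Fin d) (Fin d) ℝ) (hA : A.IsSymm)
    (lam : Fin d → ℝ) (φ : Fin d → Fin d → ℝ)
    (hortho : ∀ i j, φ i ⬝ᵥ φ j = if i = j then (1 : ℝ) else 0)
    (heig : ∀ i, A.mulVec (φ i) = lam i • φ i)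
    (hsorted : ∀ i j : Fin d, i ≤ j → lam j ≤ lam i)
    (hpos : ∀ i, 0 < lam i)
    (w : Fin d → ℝ) (hw : w ⬝ᵥ w = 1)
    (c : ℝ) (hc : c = φ ⟨0, by omega⟩ ⬝ᵥ w) (hcpos : 0 < c)
    (μ : ℝ)
    (hμ : μ = (1 + c) / (2 * c ^ 2) * (lam ⟨1, by omega⟩ / lam ⟨0, by omega⟩) ^ 2) :
    1 - (φ ⟨0, by omega⟩ ⬝ᵥ A.mulVec w) / euclNorm (A.mulVec w) ≤ μ * (1 - c) := by
  have hco : ∀ i, φ i ⬝ᵥ A.mulVec w = lam i * (φ i ⬝ᵥ w) := by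
    intro i
    rw [Matrix.dotProduct_mulVec, ← Matrix.mulVec_transpose, hA.eq, heig, smul_dotProduct,
      smul_eq_mul]
  have hP := parseval_aux φ hortho w
  have hQ := parseval_aux φ hortho (A.mulVec w)
  simp only [hco] at hQ ⊢
  set z : Fin d := ⟨0, by omega⟩ with hz
  set o : Fin d := ⟨1, by omega⟩ with ho
  rw [← Finset.add_sum_erase _ _ (Finset.mem_univ z)] at hP hQ
  rw [← hc] at hP hQ ⊢
  have hS : ∑ i ∈ univ.erase z, (lam i * (φ i ⬝ᵥ w)) ^ 2
      ≤ lam o ^ 2 * ∑ i ∈ univ.erase z, (φ i ⬝ᵥ w) ^ 2 := by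
    rw [Finset.mul_sum]
    apply Finset.sum_le_sum
    intro i hi
    have hi0 : i ≠ z := (Finset.mem_erase.mp hi).1
    have hoi : o ≤ i := by
      rw [Fin.le_def]
      have : i.val ≠ 0 := fun h => hi0 (Fin.ext h)
      simp only [ho]
      omega
    have := hsorted o i hoi
    have := hpos i
    rw [mul_pow]
    gcongr
  have hz0 := hpos z
  have ha : 0 < lam z * c := by positivity
  have hS0 : 0 ≤ ∑ i ∈ univ.erase z, (lam i * (φ i ⬝ᵥ w)) ^ 2 :=
    Finset.sum_nonneg fun i _ => sq_nonneg _
  have hvv : 0 < A.mulVec w ⬝ᵥ A.mulVec w := by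
    rw [hQ]
    positivity
  have hN : 0 < euclNorm (A.mulVec w) := Real.sqrt_pos.mpr hvv
  have hN2 : euclNorm (A.mulVec w) ^ 2 = A.mulVec w ⬝ᵥ A.mulVec w := Real.sq_sqrt hvv.le
  refine (scalar_aux _ _ ha hN).trans ?_
  have hR : μ * (1 - c) = (lam o ^ 2 * (1 - c ^ 2)) / (2 * (lam z * c) ^ 2) := by
    rw [hμ]
    field_simp
    ring
  rw [hR]
  have : ∑ i ∈ univ.erase z, (φ i ⬝ᵥ w) ^ 2 = 1 - c ^ 2 := by linarith
  rw [this] at hS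
  gcongr
  linarith
end

section
/- Let 0 ≤ γ < 1, let (w_t)_{t≥0} be a sequence in ℝ^d and (c_t)_{t≥0} a sequence of reals with c_t ≤ 1 for all t, c₀ > 0, and suppose for every t ≥ 0: (i) 1 − c_{t+1} ≤ γ (1 − c_t), and (ii) ‖w_{t+1} − w_t‖₂ ≤ √(2 (1 + γ)(1 − c_t)). Then: (1) 1 − c_t ≤ γ^t (1 − c₀) for all t, so c_t → 1; (2) the sequence (w_t) converges to some limit w* ∈ ℝ^d; (3) for every t, ‖w_t − w₀‖₂ ≤ √(2(1 + γ)(1 − c₀)) / (1 − √γ); and (4) ‖w* − w₀‖₂ ≤ √(2(1 + γ)(1 − c₀)) / (1 − √γ). -/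
open Filter

/-- quantitative convergence of the power-iteration trajectory.
If `0 ≤ γ < 1`, `c t ≤ 1`, `c 0 > 0`, `1 − c (t+1) ≤ γ (1 − c t)` and
`‖w (t+1) − w t‖ ≤ √(2(1+γ)(1 − c t))`, then `1 − c t ≤ γ^t (1 − c 0)`, `c t → 1`,
the iterates converge to some `w*`, and all iterates (and the limit) stay within distance
`√(2(1+γ)(1−c 0))/(1 − √γ)` of `w 0`. -/
theorem stmt9 {d : ℕ} (γ : ℝ) (hγ0 : 0 ≤ γ) (hγ1 : γ < 1)
    (w : ℕ → EuclideanSpace ℝ (Fin d)) (c : ℕ → ℝ)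
    (hc1 : ∀ t, c t ≤ 1) (hc0 : 0 < c 0)
    (hrec : ∀ t, 1 - c (t + 1) ≤ γ * (1 - c t))
    (hstep : ∀ t, ‖w (t + 1) - w t‖ ≤ Real.sqrt (2 * (1 + γ) * (1 - c t))) :
    (∀ t, 1 - c t ≤ γ ^ t * (1 - c 0)) ∧
    Tendsto c atTop (nhds 1) ∧
    (∃ wstar : EuclideanSpace ℝ (Fin d),
      Tendsto w atTop (nhds wstar) ∧
      ‖wstar - w 0‖ ≤ Real.sqrt (2 * (1 + γ) * (1 - c 0)) / (1 - Real.sqrt γ)) ∧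
    (∀ t, ‖w t - w 0‖ ≤ Real.sqrt (2 * (1 + γ) * (1 - c 0)) / (1 - Real.sqrt γ)) := by
  have h1 : ∀ t, 1 - c t ≤ γ ^ t * (1 - c 0) := by
    intro t
    induction t with
    | zero => simp
    | succ n ih =>
      calc 1 - c (n + 1) ≤ γ * (1 - c n) := hrec n
        _ ≤ γ * (γ ^ n * (1 - c 0)) := mul_le_mul_of_nonneg_left ih hγ0
        _ = γ ^ (n + 1) * (1 - c 0) := by ring
  have hs0 : 0 ≤ Real.sqrt γ := Real.sqrt_nonneg γ
  have hs1 : Real.sqrt γ < 1 := by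
    rw [Real.sqrt_lt' one_pos]; simpa using hγ1
  have hss : Real.sqrt γ ^ 2 = γ := Real.sq_sqrt hγ0
  set s := Real.sqrt γ with hs
  set C := Real.sqrt (2 * (1 + γ) * (1 - c 0)) with hC
  have hC0 : 0 ≤ C := Real.sqrt_nonneg _
  have h1s : 0 < 1 - s := by linarith
  have hu' : ∀ t, ‖w (t + 1) - w t‖ ≤ C * s ^ t := by
    intro t
    refine (hstep t).trans ?_
    apply Real.sqrt_le_iff.2
    refine ⟨by positivity, ?_⟩
    have e1 : C ^ 2 = 2 * (1 + γ) * (1 - c 0) := by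
      apply Real.sq_sqrt
      have := hc1 0
      exact mul_nonneg (by positivity) (by linarith)
    have e2 : (s ^ t) ^ 2 = γ ^ t := by rw [← pow_mul, mul_comm, pow_mul, hss]
    rw [mul_pow, e1, e2]
    have := mul_le_mul_of_nonneg_left (h1 t) (show 0 ≤ 2 * (1 + γ) by positivity)
    linarith
  have hu : ∀ t, dist (w t) (w (t + 1)) ≤ C * s ^ t := by
    intro t
    rw [dist_comm, dist_eq_norm]
    exact hu' t
  refine ⟨h1, ?_, ?_, ?_⟩
  · have hlim : Tendsto (fun t => 1 - γ ^ t * (1 - c 0)) atTop (nhds 1) := by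
      have := ((tendsto_pow_atTop_nhds_zero_of_lt_one hγ0 hγ1).mul_const (1 - c 0)).const_sub 1
      simpa using this
    exact tendsto_of_tendsto_of_tendsto_of_le_of_le hlim tendsto_const_nhds
      (fun t => by have := h1 t; simp only; linarith) hc1
  · obtain ⟨a, ha⟩ := cauchySeq_tendsto_of_complete (cauchySeq_of_le_geometric s C hs1 hu)
    refine ⟨a, ha, ?_⟩
    have := dist_le_of_le_geometric_of_tendsto₀ s C hs1 hu ha
    rwa [dist_comm, dist_eq_norm] at this
  · intro t
    have key : ‖w t - w 0‖ ≤ C * (1 - s ^ t) / (1 - s) := by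
      induction t with
      | zero => simp
      | succ n ih =>
        have e : C * (1 - s ^ (n + 1)) / (1 - s) = C * s ^ n + C * (1 - s ^ n) / (1 - s) := by
          field_simp
          ring
        rw [e]
        calc ‖w (n + 1) - w 0‖ = ‖(w (n + 1) - w n) + (w n - w 0)‖ := by congr 1; abel
          _ ≤ _ := (norm_add_le _ _).trans (add_le_add (hu' n) ih)
    refine key.trans ?_
    apply div_le_div_of_nonneg_right _ h1s.le
    have : 0 ≤ C * s ^ t := by positivity
    linarith
end

section
/- Let (Ω, P) be a finite probability space, let z : Ω → {0, …, C−1} with p_c := P[z = c] ∈ (0, 1) for every c, and let g_k : Ω → ℝ^{n_k} for k = 1, …, K be random vectors that are conditionally independent given z (i.e., for every c, the family (g_1, …, g_K) is independent under the conditional measure P[· | z = c]). Let g : Ω → ℝ^{n_1 + … + n_K} be the concatenation of g_1, …, g_K, and for each c define Δ(c) := E[g | z = c] − E[g | z ≠ c]. Then Var[g] = B + Σ_{c} p_c (1 − p_c)² Δ(c) Δ(c)ᵀ, where B is the block-diagonal matrix whose (k, k) block equals Σ_c p_c · Var[g_k | z = c] and whose (k, k') blocks are zero for k ≠ k'. 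-/
open Matrix Finset
open scoped Classical

lemma aux_fiber {Ω β : Type*} [Fintype Ω] (Q : Ω → ℝ) (f : Ω → β) (F : β → ℝ) (s : Finset β)
    (hs : ∀ ω, f ω ∈ s) :
    ∑ ω, Q ω * F (f ω) = ∑ x ∈ s, F x * ∑ ω, if f ω = x then Q ω else 0 := by
  simp_rw [Finset.mul_sum]
  rw [Finset.sum_comm]
  refine Finset.sum_congr rfl fun ω _ => ?_
  simp [hs ω, mul_comm]

lemma aux_indep {Ω : Type*} [Fintype Ω] {K : ℕ} {β : Fin K → Type*} (Q : Ω → ℝ)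
    (f : (k : Fin K) → Ω → β k)
    (hind : ∀ v : (k : Fin K) → β k,
      (∑ ω, if (∀ k, f k ω = v k) then Q ω else 0) =
        ∏ k, ∑ ω, if f k ω = v k then Q ω else 0) (F : (k : Fin K) → β k → ℝ) :
    ∑ ω, Q ω * ∏ k, F k (f k ω) = ∏ k, ∑ ω, Q ω * F k (f k ω) := by
  have h1 : ∀ k, ∑ ω, Q ω * F k (f k ω) =
      ∑ x ∈ Finset.univ.image (f k), F k x * ∑ ω, if f k ω = x then Q ω else 0 :=
    fun k => aux_fiber Q (f k) (F k) _ (by simp)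
  simp_rw [h1]
  rw [Finset.prod_univ_sum]
  have h2 := aux_fiber Q (fun ω k => f k ω) (fun v => ∏ k, F k (v k))
    (Fintype.piFinset fun k => Finset.univ.image (f k)) (by simp)
  rw [h2]
  refine Finset.sum_congr rfl fun v _ => ?_
  rw [Finset.prod_mul_distrib, ← hind v]
  simp only [funext_iff]

lemma aux_uncorr {Ω : Type*} [Fintype Ω] {K : ℕ} {β : Fin K → Type*} (Q : Ω → ℝ)
    (hQ : ∑ ω, Q ω = 1) (f : (k : Fin K) → Ω → β k)
    (hind : ∀ v : (k : Fin K) → β k,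
      (∑ ω, if (∀ k, f k ω = v k) then Q ω else 0) =
        ∏ k, ∑ ω, if f k ω = v k then Q ω else 0) (k k' : Fin K) (hk : k ≠ k')
    (a : β k → ℝ) (b : β k' → ℝ) :
    ∑ ω, Q ω * (a (f k ω) * b (f k' ω)) =
      (∑ ω, Q ω * a (f k ω)) * ∑ ω, Q ω * b (f k' ω) := by
  set F : (k : Fin K) → β k → ℝ :=
    Function.update (Function.update (fun _ _ => 1) k a) k' b with hF
  have hFk : F k = a := by simp [hF, hk]
  have hFk' : F k' = b := by simp [hF]
  have hFl : ∀ l, l ≠ k ∧ l ≠ k' → F l = fun _ => 1 := by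
    rintro l ⟨h1, h2⟩
    simp [hF, h1, h2]
  have h := aux_indep Q f hind F
  rw [Finset.prod_eq_mul k k' hk (fun l _ hl => by simp [hFl l hl, hQ]) (by simp) (by simp),
    hFk, hFk'] at h
  rw [← h]
  refine Finset.sum_congr rfl fun ω _ => ?_
  rw [Finset.prod_eq_mul k k' hk (fun l _ hl => by simp [hFl l hl]) (by simp) (by simp),
    hFk, hFk']

lemma covMat_entry {Ω ι : Type*} [Fintype Ω] [Fintype ι] (P : Ω → ℝ)
    (h : Ω → ι → ℝ) (i j : ι) :
    covMat P h i j = (∑ ω, P ω * (h ω i * h ω j)) -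
      (∑ ω, P ω * h ω i) * ∑ ω, P ω * h ω j := by
  simp [covMat, expecVec, Matrix.sum_apply, vecMulVec_apply]

/-- closed-form variance under conditional independence. If the
random vectors `g_k` are conditionally independent given the categorical variable `z`,
then the covariance of their concatenation `g` decomposes as a block-diagonal matrix `B`
(whose `(k,k)` block is `Σ_c p_c Var[g_k | z = c]`) plus
`Σ_c p_c (1 − p_c)² Δ(c) Δ(c)ᵀ`, where `Δ(c) = E[g | z = c] − E[g | z ≠ c]`.
The identity is stated entrywise over the sigma-type index of the concatenation. -/
theorem stmt13 {Ω : Type*} [Fintype Ω] {C K : ℕ}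
    (P : Ω → ℝ) (hP : ∀ ω, 0 ≤ P ω) (hPsum : ∑ ω : Ω, P ω = 1)
    (z : Ω → Fin C) (p : Fin C → ℝ)
    (hp : ∀ c, p c = ∑ ω, if z ω = c then P ω else 0)
    (hp0 : ∀ c, 0 < p c) (hp1 : ∀ c, p c < 1)
    (n : Fin K → ℕ) (gk : (k : Fin K) → Ω → Fin (n k) → ℝ)
    (Pc : Fin C → Ω → ℝ)
    (hPc : ∀ c ω, Pc c ω = (if z ω = c then P ω else 0) / p c)
    (hcondindep : ∀ (c : Fin C) (v : (k : Fin K) → Fin (n k) → ℝ),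
      (∑ ω, if (∀ k, gk k ω = v k) then Pc c ω else 0) =
        ∏ k, ∑ ω, if gk k ω = v k then Pc c ω else 0) :
    let g : Ω → ((k : Fin K) × Fin (n k)) → ℝ := fun ω a => gk a.1 ω a.2
    let Pnotc : Fin C → Ω → ℝ := fun c ω => (if z ω ≠ c then P ω else 0) / (1 - p c)
    let Δ : Fin C → ((k : Fin K) × Fin (n k)) → ℝ := fun c =>
      expecVec (Pc c) g - expecVec (Pnotc c) g
    ∀ (k k' : Fin K) (i : Fin (n k)) (j : Fin (n k')),
      covMat P g ⟨k, i⟩ ⟨k', j⟩ =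
        (if h : k = k' then
            ∑ c, p c * covMat (Pc c) (gk k) i (Fin.cast (congrArg n h.symm) j)
          else 0) +
        ∑ c, p c * (1 - p c) ^ 2 * (Δ c ⟨k, i⟩ * Δ c ⟨k', j⟩) := by
  intro g Pnotc Δ k k' i j
  have hne : ∀ c, p c ≠ 0 := fun c => (hp0 c).ne'
  have hne1 : ∀ c, 1 - p c ≠ 0 := fun c => by linarith [hp1 c]
  have hsum1 : ∀ c, ∑ ω, Pc c ω = 1 := by
    intro c
    simp_rw [hPc]
    rw [← Finset.sum_div, ← hp, div_self (hne c)]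
  have hpPc : ∀ c ω, p c * Pc c ω = if z ω = c then P ω else 0 := by
    intro c ω
    rw [hPc, mul_div_cancel₀ _ (hne c)]
  have htot : ∀ X : Ω → ℝ, ∑ ω, P ω * X ω = ∑ c, p c * ∑ ω, Pc c ω * X ω := by
    intro X
    simp_rw [Finset.mul_sum, ← mul_assoc, hpPc]
    rw [Finset.sum_comm]
    refine Finset.sum_congr rfl fun ω _ => ?_
    simp
  have hpsum : ∑ c, p c = 1 := by
    have := htot (fun _ => 1)
    simpa [hsum1, hPsum] using this.symm
  have hΔ : ∀ c a, (1 - p c) * Δ c a =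
      (∑ ω, Pc c ω * g ω a) - ∑ ω, P ω * g ω a := by
    intro c a
    have e1 : Δ c a = (∑ ω, Pc c ω * g ω a) - ∑ ω, Pnotc c ω * g ω a := by
      simp [Δ, expecVec]
    have e2 : ∑ ω, P ω * g ω a =
        p c * (∑ ω, Pc c ω * g ω a) + (1 - p c) * ∑ ω, Pnotc c ω * g ω a := by
      rw [Finset.mul_sum, Finset.mul_sum, ← Finset.sum_add_distrib]
      refine Finset.sum_congr rfl fun ω _ => ?_
      rw [← mul_assoc, ← mul_assoc, hpPc]
      simp only [Pnotc]
      rw [mul_div_cancel₀ _ (hne1 c)]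
      by_cases h : z ω = c <;> simp [h]
    rw [e1, e2]
    ring
  have hmain : covMat P g ⟨k, i⟩ ⟨k', j⟩ = ∑ c, p c * covMat (Pc c) g ⟨k, i⟩ ⟨k', j⟩ +
      ∑ c, p c * (1 - p c) ^ 2 * (Δ c ⟨k, i⟩ * Δ c ⟨k', j⟩) := by
    have e : ∀ c, p c * (1 - p c) ^ 2 * (Δ c ⟨k, i⟩ * Δ c ⟨k', j⟩) =
        p c * (((1 - p c) * Δ c ⟨k, i⟩) * ((1 - p c) * Δ c ⟨k', j⟩)) := fun c => by ring
    simp_rw [e, hΔ, covMat_entry]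
    have t1 := htot (fun ω => g ω ⟨k, i⟩)
    have t2 := htot (fun ω => g ω ⟨k', j⟩)
    have t3 := htot (fun ω => g ω ⟨k, i⟩ * g ω ⟨k', j⟩)
    rw [t3]
    generalize (∑ ω, P ω * g ω ⟨k, i⟩) = A at *
    generalize (∑ ω, P ω * g ω ⟨k', j⟩) = B at *
    rw [← Finset.sum_add_distrib]
    have e3 : ∀ c, p c * ((∑ ω, Pc c ω * (g ω ⟨k, i⟩ * g ω ⟨k', j⟩)) -
        (∑ ω, Pc c ω * g ω ⟨k, i⟩) * ∑ ω, Pc c ω * g ω ⟨k', j⟩) +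
        p c * (((∑ ω, Pc c ω * g ω ⟨k, i⟩) - A) * ((∑ ω, Pc c ω * g ω ⟨k', j⟩) - B)) =
        p c * (∑ ω, Pc c ω * (g ω ⟨k, i⟩ * g ω ⟨k', j⟩))
          - (p c * ∑ ω, Pc c ω * g ω ⟨k, i⟩) * B
          - (p c * ∑ ω, Pc c ω * g ω ⟨k', j⟩) * A + p c * (A * B) := fun c => by ring
    simp_rw [e3]
    rw [Finset.sum_add_distrib, Finset.sum_sub_distrib, Finset.sum_sub_distrib,
      ← Finset.sum_mul, ← Finset.sum_mul, ← Finset.sum_mul, hpsum, ← t1, ← t2]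
    ring
  rw [hmain]
  congr 1
  split_ifs with h
  · subst h
    refine Finset.sum_congr rfl fun c _ => ?_
    simp [covMat_entry, g]
  · refine Finset.sum_eq_zero fun c _ => ?_
    rw [covMat_entry]
    have := aux_uncorr (Pc c) (hsum1 c) gk (fun v => by convert hcondindep c v) k k' h (fun x => x i) (fun x => x j)
    simp only [g]
    rw [this, sub_self, mul_zero]
end

section
/- Let b > 0 and y₀ > 0, and let y : [0, T) → ℝ (with T > 0) be differentiable with y(0) = y₀ and y'(t) = (y(t) + b) · y(t) for all t ∈ [0, T). Then y(t) > 0 for all t ∈ [0, T), and for all t ∈ [0, T): y(t) / (y(t) + b) = (y₀ / (y₀ + b)) · e^{b t}. -/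
/-- closed-form solution of the 1-d dynamics `ẏ = (y + b) y`.
If `b > 0`, `y 0 = y₀ > 0` and `y` solves `y' = (y + b) y` on `[0, T)`, then `y` stays
positive and `y t/(y t + b) = (y₀/(y₀ + b)) e^{b t}` on `[0, T)`. -/
theorem stmt15 (b y₀ T : ℝ) (hb : 0 < b) (hy₀ : 0 < y₀) (hT : 0 < T)
    (y : ℝ → ℝ) (hy0 : y 0 = y₀)
    (hderiv : ∀ t ∈ Set.Ico (0 : ℝ) T,
      HasDerivWithinAt y ((y t + b) * y t) (Set.Ico (0 : ℝ) T) t) :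
    ∀ t ∈ Set.Ico (0 : ℝ) T,
      0 < y t ∧ y t / (y t + b) = (y₀ / (y₀ + b)) * Real.exp (b * t) := by
  intro t ht
  have hsub : Set.Icc (0 : ℝ) t ⊆ Set.Ico (0 : ℝ) T :=
    fun x hx => ⟨hx.1, lt_of_le_of_lt hx.2 ht.2⟩
  have hcont : ContinuousOn y (Set.Icc 0 t) := fun x hx =>
    ((hderiv x (hsub hx)).continuousWithinAt).mono hsub
  have hright : ∀ x ∈ Set.Ico (0 : ℝ) t,
      HasDerivWithinAt y ((y x + b) * y x) (Set.Ici x) x := by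
    intro x hx
    have hxT : x < T := lt_trans hx.2 ht.2
    refine (hderiv x ⟨hx.1, hxT⟩).mono_of_mem_nhdsWithin ?_
    refine Filter.mem_of_superset (Ico_mem_nhdsGE hxT) ?_
    exact fun z hz => ⟨le_trans hx.1 hz.1, hz.2⟩
  have hge : ∀ x ∈ Set.Icc (0 : ℝ) t, y₀ ≤ y x := by
    intro x hx
    refine image_le_of_deriv_right_lt_deriv_boundary' (f := fun _ => y₀) (f' := fun _ => 0)
      (B := y) (B' := fun x => (y x + b) * y x) (a := 0) (b := t) continuousOn_const
      (fun x _ => hasDerivWithinAt_const _ _ _) hy0.ge hcont hright ?_ hx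
    intro z _ hz
    rw [← hz]
    positivity
  have hpos : ∀ x ∈ Set.Icc (0 : ℝ) t, 0 < y x := fun x hx => lt_of_lt_of_le hy₀ (hge x hx)
  have htt : t ∈ Set.Icc (0 : ℝ) t := ⟨ht.1, le_rfl⟩
  refine ⟨hpos t htt, ?_⟩
  have key := constant_of_has_deriv_right_zero
    (f := fun x => y x / (y x + b) * Real.exp (-(b * x))) (a := 0) (b := t) ?_ ?_ t htt
  · simp only [hy0, mul_zero, neg_zero, Real.exp_zero, mul_one] at key
    rw [← key, mul_assoc, ← Real.exp_add]
    simp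
  · refine ContinuousOn.mul (hcont.div (hcont.add continuousOn_const) ?_) (by fun_prop)
    intro x hx
    have := hpos x hx
    positivity
  · intro x hx
    have hp := hpos x ⟨hx.1, hx.2.le⟩
    have hne : y x + b ≠ 0 := by positivity
    have h1 := (hright x hx).fun_div ((hright x hx).add_const b) hne
    have h2 : HasDerivAt (fun x : ℝ => Real.exp (-(b * x)))
        (Real.exp (-(b * x)) * (-(b * 1))) x :=
      (((hasDerivAt_id x).const_mul b).neg).exp
    refine (h1.fun_mul h2.hasDerivWithinAt).congr_deriv ?_
    field_simp
    ring
end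

section
/- Fix N ≥ 2, K ≥ 1, M ≥ 1, d ≥ 1, d_out ≥ 1. Let x_k[i] ∈ ℝ^d for k ∈ {1,…,K} and i ∈ {1,…,2N} be fixed inputs (with samples i and i + N being the two views of the same datum, written i' := i + N), let α_{ij} ∈ ℝ for 1 ≤ i ≤ N, j ≠ i be pairwise importances, and for two families of real-valued samples (a[i]), (b[i]) define the scalar contrastive covariance C_α[a, b] := Σ_{i=1}^N Σ_{j≠i} α_{ij}(a[i] − a[j])(b[i] − b[j]) − Σ_{i=1}^N (Σ_{j≠i} α_{ij})(a[i] − a[i'])(b[i] − b[i']); define the d×d matrix C_α[x_k, x_{k'}] entrywise by applying C_α to the coordinate samples. For weights W = (w_{km}) ∈ (ℝ^d)^{K×M} and V = (v_{l,km}) ∈ ℝ^{d_out × KM}, set s_{km,k'm'} := Σ_l v_{l,km} v_{l,k'm'}, define the linear-network outputs f_l[i] := Σ_{k,m} v_{l,km} ⟨w_{km}, x_k[i]⟩, and the energy E(W) := (1/2) Σ_{l=1}^{d_out} C_α[f_l, f_l]. Then: (1) the gradient of E with respect to w_{km} equals Σ_{k',m'} s_{km,k'm'} · C_α[x_k, x_{k'}]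 · w_{k'm'}; (2) if moreover s_{km,k'm'} = s_{km} · s_{k'm'} for some scalars (s_{km}) (rank-one case), then ∇_{w_{km}} E = s_{km} · b_k(W, V), where b_k(W, V) := Σ_{k',m'} s_{k'm'} C_α[x_k, x_{k'}] w_{k'm'} does not depend on m; consequently for all m, m': s_{km'} · ∇_{w_{km}} E = s_{km} · ∇_{w_{km'}} E, i.e., the gradients of all weights in the same receptive field are pairwise colinear. -/
open Matrix Finset
open scoped RealInnerProductSpace

/-- The scalar contrastive covariance. -/
noncomputable def CC {N : ℕ} (α : Fin N → Fin N → ℝ) (a a' b b' : Fin N → ℝ) : ℝ :=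
  (∑ i, ∑ j ∈ Finset.univ \ {i}, α i j * ((a i - a j) * (b i - b j))) -
    ∑ i, (∑ j ∈ Finset.univ \ {i}, α i j) * ((a i - a' i) * (b i - b' i))

lemma CC_comm {N : ℕ} (α : Fin N → Fin N → ℝ) (a a' b b' : Fin N → ℝ) :
    CC α a a' b b' = CC α b b' a a' := by
  unfold CC
  simp only [mul_comm]

lemma CC_sum {N : ℕ} (α : Fin N → Fin N → ℝ) {ι : Type*} (S : Finset ι) (c : ι → ℝ)
    (a a' : ι → Fin N → ℝ) (b b' : Fin N → ℝ) :
    CC α (fun i => ∑ r ∈ S, c r * a r i) (fun i => ∑ r ∈ S, c r * a' r i) b b'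
      = ∑ r ∈ S, c r * CC α (a r) (a' r) b b' := by
  classical
  induction S using Finset.induction_on with
  | empty => simp [CC]
  | insert r S hr ih =>
    rw [Finset.sum_insert hr, ← ih]
    simp only [Finset.sum_insert hr]
    unfold CC
    rw [mul_sub, Finset.mul_sum, Finset.mul_sum, sub_add_sub_comm, ← Finset.sum_add_distrib,
      ← Finset.sum_add_distrib]
    congr 1
    · refine Finset.sum_congr rfl fun i _ => ?_
      rw [Finset.mul_sum, ← Finset.sum_add_distrib]
      refine Finset.sum_congr rfl fun j _ => ?_
      ring
    · refine Finset.sum_congr rfl fun i _ => ?_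
      ring

lemma CC_hasFDerivAt {N : ℕ} (α : Fin N → Fin N → ℝ) {V : Type*} [NormedAddCommGroup V]
    [NormedSpace ℝ V] (a a' : V → Fin N → ℝ) (A A' : Fin N → V →L[ℝ] ℝ) (w : V)
    (ha : ∀ i, HasFDerivAt (fun u => a u i) (A i) w)
    (ha' : ∀ i, HasFDerivAt (fun u => a' u i) (A' i) w) :
    ∃ L : V →L[ℝ] ℝ, HasFDerivAt (fun u => CC α (a u) (a' u) (a u) (a' u)) L w ∧
      ∀ h, L h = 2 * CC α (fun i => A i h) (fun i => A' i h) (a w) (a' w) := by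
  refine ⟨_, HasFDerivAt.fun_sub
    (HasFDerivAt.fun_sum fun i _ => HasFDerivAt.fun_sum fun j _ =>
      (((ha i).fun_sub (ha j)).fun_mul ((ha i).fun_sub (ha j))).const_mul (α i j))
    (HasFDerivAt.fun_sum fun i _ =>
      (((ha i).fun_sub (ha' i)).fun_mul ((ha i).fun_sub (ha' i))).const_mul _), ?_⟩
  intro h
  simp only [CC, ContinuousLinearMap.sub_apply, ContinuousLinearMap.sum_apply,
    ContinuousLinearMap.smul_apply, ContinuousLinearMap.add_apply, smul_eq_mul]
  rw [mul_sub, Finset.mul_sum, Finset.mul_sum]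
  congr 1
  · refine Finset.sum_congr rfl fun i _ => ?_
    rw [Finset.mul_sum]
    refine Finset.sum_congr rfl fun j _ => ?_
    ring
  · refine Finset.sum_congr rfl fun i _ => ?_
    ring

lemma out_hasFDerivAt {K M d : ℕ} (c : Fin K → Fin M → ℝ) (y : Fin K → EuclideanSpace ℝ (Fin d))
    (W : Fin K → Fin M → EuclideanSpace ℝ (Fin d)) (k : Fin K) (m : Fin M) :
    HasFDerivAt (fun u : EuclideanSpace ℝ (Fin d) => ∑ k', ∑ m', c k' m' *
      ⟪(if k' = k ∧ m' = m then u else W k' m'), y k'⟫) (c k m • innerSL ℝ (y k)) (W k m) := by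
  have h : (c k m • innerSL ℝ (y k)) = ∑ k', ∑ m',
      (if k' = k ∧ m' = m then c k' m' • innerSL ℝ (y k') else 0) := by
    simp [ite_and]
  rw [h]
  refine HasFDerivAt.fun_sum fun k' _ => HasFDerivAt.fun_sum fun m' _ => ?_
  split_ifs with hk
  · have := ((innerSL ℝ (y k')).hasFDerivAt (x := W k m)).const_mul (c k' m')
    simpa [real_inner_comm] using this
  · exact hasFDerivAt_const _ _

lemma grad_main {N K M d dout : ℕ}
    (x x' : Fin K → Fin N → EuclideanSpace ℝ (Fin d))
    (α : Fin N → Fin N → ℝ)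
    (v : Fin dout → Fin K → Fin M → ℝ)
    (W : Fin K → Fin M → EuclideanSpace ℝ (Fin d)) (k : Fin K) (m : Fin M) :
    HasGradientAt (fun u : EuclideanSpace ℝ (Fin d) => (1 / 2) * ∑ l, CC α
        (fun i => ∑ k', ∑ m', v l k' m' * ⟪(if k' = k ∧ m' = m then u else W k' m'), x k' i⟫)
        (fun i => ∑ k', ∑ m', v l k' m' * ⟪(if k' = k ∧ m' = m then u else W k' m'), x' k' i⟫)
        (fun i => ∑ k', ∑ m', v l k' m' * ⟪(if k' = k ∧ m' = m then u else W k' m'), x k' i⟫)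
        (fun i => ∑ k', ∑ m', v l k' m' * ⟪(if k' = k ∧ m' = m then u else W k' m'), x' k' i⟫))
      ((EuclideanSpace.equiv (Fin d) ℝ).symm
          (∑ k', ∑ m', (∑ l, v l k m * v l k' m') •
            (Matrix.mulVec (fun r cc => CC α (fun i => x k i r) (fun i => x' k i r)
              (fun i => x k' i cc) (fun i => x' k' i cc))
                (EuclideanSpace.equiv (Fin d) ℝ (W k' m'))))) (W k m) := by
  rw [hasGradientAt_iff_hasFDerivAt]
  choose L hL hL' using fun l => CC_hasFDerivAt α
    (fun u : EuclideanSpace ℝ (Fin d) => fun i => ∑ k', ∑ m', v l k' m' *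
      ⟪(if k' = k ∧ m' = m then u else W k' m'), x k' i⟫)
    (fun u : EuclideanSpace ℝ (Fin d) => fun i => ∑ k', ∑ m', v l k' m' *
      ⟪(if k' = k ∧ m' = m then u else W k' m'), x' k' i⟫) _ _ (W k m)
    (fun i => out_hasFDerivAt (v l) (fun k => x k i) W k m)
    (fun i => out_hasFDerivAt (v l) (fun k => x' k i) W k m)
  have hW : ∀ k' m', (if k' = k ∧ m' = m then W k m else W k' m') = W k' m' := by
    intro k' m'
    split_ifs with h
    · rw [h.1, h.2]
    · rfl
  have key := (HasFDerivAt.fun_sum (u := Finset.univ) fun l _ => hL l).const_mul (1 / 2 : ℝ)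
  refine key.congr_fderiv ?_
  ext h
  have e1 : ∀ (y : Fin K → Fin N → EuclideanSpace ℝ (Fin d)) (i : Fin N) (k' : Fin K) (u : EuclideanSpace ℝ (Fin d)),
      ⟪u, y k' i⟫ = ∑ r, u r * y k' i r := by
    intro y i k' u
    simp [PiLp.inner_apply, mul_comm]
  have e2 : ∀ l, L l h = 2 * (v l k m * ∑ r, h r * ∑ k', ∑ m', v l k' m' * ∑ cc, W k' m' cc *
      CC α (fun i => x k i r) (fun i => x' k i r)
              (fun i => x k' i cc) (fun i => x' k' i cc)) := by
    intro l
    rw [hL']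
    congr 1
    simp only [hW, ContinuousLinearMap.smul_apply, innerSL_apply_apply, smul_eq_mul]
    have := CC_sum α {()} (fun _ => v l k m) (fun _ i => ⟪x k i, h⟫) (fun _ i => ⟪x' k i, h⟫)
    simp only [Finset.sum_singleton] at this
    rw [this]
    congr 1
    simp only [real_inner_comm h]
    simp only [e1 x, e1 x']
    rw [CC_sum]
    refine Finset.sum_congr rfl fun r _ => ?_
    congr 1
    rw [CC_comm]
    simp only [← Finset.univ_product_univ, ← Finset.sum_product']
    rw [CC_sum]
    refine Finset.sum_congr rfl fun p _ => ?_
    congr 1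
    rw [CC_sum]
    refine Finset.sum_congr rfl fun cc _ => ?_
    rw [CC_comm]
  simp only [ContinuousLinearMap.smul_apply, ContinuousLinearMap.sum_apply, e2,
    InnerProductSpace.toDual_apply_apply, PiLp.inner_apply, smul_eq_mul]
  simp only [← Finset.mul_sum]
  rw [← mul_assoc]
  norm_num
  simp only [Matrix.mulVec, dotProduct, Finset.mul_sum, Finset.sum_mul]
  rw [Finset.sum_comm]
  refine Finset.sum_congr rfl fun r _ => ?_
  rw [Finset.sum_comm]
  refine Finset.sum_congr rfl fun k' _ => ?_
  rw [Finset.sum_comm]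
  refine Finset.sum_congr rfl fun m' _ => ?_
  rw [Finset.sum_comm]
  refine Finset.sum_congr rfl fun cc _ => ?_
  refine Finset.sum_congr rfl fun l _ => ?_
  have e3 : (EuclideanSpace.equiv (Fin d) ℝ) (W k' m') cc = W k' m' cc := rfl
  rw [e3]
  ring

/-- gradient colinearity in linear two-layer networks. For the linear
two-layer contrastive energy `E(W) = ½ Σ_l C_α[f_l, f_l]` with non-overlapping receptive
fields, the gradient with respect to `w_{km}` equals
`Σ_{k',m'} s_{km,k'm'} C_α[x_k, x_{k'}] w_{k'm'}`; in the rank-one case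
`s_{km,k'm'} = s_{km} s_{k'm'}`, it equals `s_{km} b_k(W, V)` with `b_k` independent of
`m`, so the gradients of all weights in the same receptive field are pairwise colinear. -/
theorem stmt17 {N K M d dout : ℕ} (hN : 2 ≤ N)
    (x x' : Fin K → Fin N → EuclideanSpace ℝ (Fin d))
    (α : Fin N → Fin N → ℝ)
    (v : Fin dout → Fin K → Fin M → ℝ)
    (W : Fin K → Fin M → EuclideanSpace ℝ (Fin d)) :
    -- contrastive covariance of two scalar sample families (with second views)
    let Cα : (Fin N → ℝ) → (Fin N → ℝ) → (Fin N → ℝ) → (Fin N → ℝ) → ℝ :=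
      fun a a' bg bg' =>
        (∑ i, ∑ j ∈ Finset.univ \ {i}, α i j * ((a i - a j) * (bg i - bg j))) -
          ∑ i, (∑ j ∈ Finset.univ \ {i}, α i j) * ((a i - a' i) * (bg i - bg' i))
    -- the d×d matrix C_α[x_k, x_{k'}]
    let Cmat : Fin K → Fin K → Matrix (Fin d) (Fin d) ℝ := fun k k' r cc =>
      Cα (fun i => x k i r) (fun i => x' k i r) (fun i => x k' i cc) (fun i => x' k' i cc)
    let s : Fin K → Fin M → Fin K → Fin M → ℝ := fun k m k' m' => ∑ l, v l k m * v l k' m'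
    -- linear-network outputs on the two views
    let f : (Fin K → Fin M → EuclideanSpace ℝ (Fin d)) → Fin dout → Fin N → ℝ :=
      fun Wt l i => ∑ k, ∑ m, v l k m * ⟪Wt k m, x k i⟫
    let f' : (Fin K → Fin M → EuclideanSpace ℝ (Fin d)) → Fin dout → Fin N → ℝ :=
      fun Wt l i => ∑ k, ∑ m, v l k m * ⟪Wt k m, x' k i⟫
    let E : (Fin K → Fin M → EuclideanSpace ℝ (Fin d)) → ℝ :=
      fun Wt => (1 / 2) * ∑ l, Cα (f Wt l) (f' Wt l) (f Wt l) (f' Wt l)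
    -- the energy as a function of the single weight `w_{km}`, all others held fixed
    let F : Fin K → Fin M → EuclideanSpace ℝ (Fin d) → ℝ := fun k m u =>
      E (fun k' m' => if k' = k ∧ m' = m then u else W k' m')
    -- (1) closed form of the gradient
    (∀ k m, HasGradientAt (F k m)
        ((EuclideanSpace.equiv (Fin d) ℝ).symm
          (∑ k', ∑ m', s k m k' m' •
            (Cmat k k').mulVec (EuclideanSpace.equiv (Fin d) ℝ (W k' m')))) (W k m)) ∧
    -- (2) rank-one case: gradient is `s_{km} • b_k(W,V)` and gradients are colinear
    (∀ sv : Fin K → Fin M → ℝ,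
      (∀ k m k' m', s k m k' m' = sv k m * sv k' m') →
      (∀ k m, HasGradientAt (F k m)
          (sv k m • (EuclideanSpace.equiv (Fin d) ℝ).symm
            (∑ k', ∑ m', sv k' m' •
              (Cmat k k').mulVec (EuclideanSpace.equiv (Fin d) ℝ (W k' m')))) (W k m)) ∧
      (∀ k m m' (G G' : EuclideanSpace ℝ (Fin d)),
        HasGradientAt (F k m) G (W k m) → HasGradientAt (F k m') G' (W k m') →
        sv k m' • G = sv k m • G')) := by
  intro Cα Cmat s f f' E F
  have h1 : ∀ k m, HasGradientAt (F k m)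
        ((EuclideanSpace.equiv (Fin d) ℝ).symm
          (∑ k', ∑ m', s k m k' m' •
            (Cmat k k').mulVec (EuclideanSpace.equiv (Fin d) ℝ (W k' m')))) (W k m) :=
    fun k m => grad_main x x' α v W k m
  refine ⟨h1, fun sv hs => ?_⟩
  have h2 : ∀ k m, HasGradientAt (F k m)
          (sv k m • (EuclideanSpace.equiv (Fin d) ℝ).symm
            (∑ k', ∑ m', sv k' m' •
              (Cmat k k').mulVec (EuclideanSpace.equiv (Fin d) ℝ (W k' m')))) (W k m) := by
    intro k m
    have := h1 k m
    simp only [hs, mul_smul, ← Finset.smul_sum] at this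
    rwa [map_smul] at this
  refine ⟨h2, fun k m m' G G' hG hG' => ?_⟩
  rw [hG.unique (h2 k m), hG'.unique (h2 k m'), smul_comm]
end

section
/- Let d ≥ 1 and ε ∈ [0, 1], and let Y_1, …, Y_d be independent random variables each uniformly distributed on the interval [−1, 1]. Then P[ Y_1 > 0 and Y_1 + ε ≥ max_{2 ≤ l ≤ d} Y_l ] = (1/d) · ( 1 − ((1 + ε)/2)^d ) + ε/2 (where for d = 1 the maximum over the empty set is interpreted so that the event reduces to {Y_1 > 0} and the formula gives 1/2 only when ε = 1; for d ≥ 2 the formula holds as stated). Moreover, for ε > 1 the probability equals 1/2, and for −1 < ε < 0 it equals (1/d) · ( (1 + ε/2)^d − ((1 + ε)/2)^d ). -/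
open MeasureTheory

lemma race_cdf (x : ℝ) (hx : -1 ≤ x) :
    ((2 : ENNReal)⁻¹ • volume.restrict (Set.Icc (-1 : ℝ) 1)) (Set.Iic x)
      = ENNReal.ofReal ((min 1 x + 1) / 2) := by
  rw [Measure.smul_apply, Measure.restrict_apply measurableSet_Iic]
  have : Set.Iic x ∩ Set.Icc (-1 : ℝ) 1 = Set.Icc (-1) (min 1 x) := by
    ext y
    simp only [Set.mem_inter_iff, Set.mem_Iic, Set.mem_Icc, le_min_iff]
    tauto
  rw [this, Real.volume_Icc, smul_eq_mul, div_eq_inv_mul,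
    ENNReal.ofReal_mul (by norm_num), ENNReal.ofReal_inv_of_pos (by norm_num)]
  norm_num

lemma race_event (n : ℕ) (ε : ℝ) (hε : -1 < ε) :
    (Measure.pi fun _ : Fin (n + 1) =>
      (2 : ENNReal)⁻¹ • volume.restrict (Set.Icc (-1 : ℝ) 1))
      {Y | 0 < Y 0 ∧ ∀ l, l ≠ 0 → Y l ≤ Y 0 + ε}
    = ENNReal.ofReal (1 / 2 * ∫ y in (0 : ℝ)..1, ((min 1 (y + ε) + 1) / 2) ^ n) := by
  set ν : Measure ℝ := (2 : ENNReal)⁻¹ • volume.restrict (Set.Icc (-1 : ℝ) 1) with hν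
  haveI : IsFiniteMeasure ν := by
    constructor
    rw [hν, Measure.smul_apply, Measure.restrict_apply_univ, Real.volume_Icc, smul_eq_mul]
    exact ENNReal.mul_lt_top (by simp) ENNReal.ofReal_lt_top
  have hmp := measurePreserving_piFinSuccAbove (fun _ : Fin (n + 1) => ν) 0
  let S : Set (ℝ × (Fin n → ℝ)) := {p | 0 < p.1 ∧ ∀ l, p.2 l ≤ p.1 + ε}
  have hS : MeasurableSet S := by
    apply MeasurableSet.inter
    · exact measurableSet_lt measurable_const measurable_fst
    · have : {p : ℝ × (Fin n → ℝ) | ∀ l, p.2 l ≤ p.1 + ε}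
          = ⋂ l, {p : ℝ × (Fin n → ℝ) | p.2 l ≤ p.1 + ε} := by
        ext p; simp
      change MeasurableSet {p : ℝ × (Fin n → ℝ) | ∀ l, p.2 l ≤ p.1 + ε}
      rw [this]
      refine MeasurableSet.iInter fun l => measurableSet_le ?_ ?_
      · fun_prop
      · fun_prop
  have hpre : {Y : Fin (n + 1) → ℝ | 0 < Y 0 ∧ ∀ l, l ≠ 0 → Y l ≤ Y 0 + ε}
      = (MeasurableEquiv.piFinSuccAbove (fun _ => ℝ) 0) ⁻¹' S := by
    ext Y
    simp only [Set.mem_ofPred_eq, Set.mem_preimage, S, Fin.forall_fin_succ]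
    simp [MeasurableEquiv.piFinSuccAbove, Fin.tail]
  rw [hpre, hmp.measure_preimage hS.nullMeasurableSet, Measure.prod_apply hS]
  have hsec : ∀ y : ℝ, (Measure.pi fun _ : Fin n => ν) (Prod.mk y ⁻¹' S)
      = (Set.Ioi (0 : ℝ)).indicator
        (fun y => ENNReal.ofReal (((min 1 (y + ε) + 1) / 2) ^ n)) y := by
    intro y
    by_cases hy : 0 < y
    · rw [Set.indicator_of_mem (show y ∈ Set.Ioi (0 : ℝ) from hy)]
      have : Prod.mk y ⁻¹' S = Set.univ.pi fun _ : Fin n => Set.Iic (y + ε) := by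
        ext z; simp [S, hy, Pi.le_def]
      rw [this, Measure.pi_pi, Finset.prod_const, Finset.card_univ, Fintype.card_fin, hν,
        race_cdf _ (by linarith), ENNReal.ofReal_pow]
      have : -1 ≤ min 1 (y + ε) := le_min (by norm_num) (by linarith)
      linarith
    · rw [Set.indicator_of_notMem (show y ∉ Set.Ioi (0 : ℝ) from hy)]
      have : Prod.mk y ⁻¹' S = ∅ := by
        ext z; simp [S, hy, Pi.le_def]
      rw [this, measure_empty]
  have h1 : ∀ k : ℕ, (∫⁻ y, (Measure.pi fun _ : Fin n => ν) (Prod.mk y ⁻¹' S) ∂ν)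
      = ∫⁻ y, (Set.Ioi (0 : ℝ)).indicator
        (fun y => ENNReal.ofReal (((min 1 (y + ε) + 1) / 2) ^ n)) y ∂ν :=
    fun _ => lintegral_congr hsec
  have h2 : Set.Ioi (0 : ℝ) ∩ Set.Icc (-1) 1 = Set.Ioc 0 1 := by
    ext y
    simp only [Set.mem_inter_iff, Set.mem_Ioi, Set.mem_Icc, Set.mem_Ioc]
    constructor
    · rintro ⟨a, b, c⟩; exact ⟨a, c⟩
    · rintro ⟨a, c⟩; exact ⟨a, by linarith, c⟩
  have hcont : Continuous fun y : ℝ => ((min 1 (y + ε) + 1) / 2) ^ n := by fun_prop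
  rw [h1 0, lintegral_indicator measurableSet_Ioi, hν, Measure.restrict_smul,
    Measure.restrict_restrict measurableSet_Ioi, h2, lintegral_smul_measure,
    ENNReal.ofReal_mul (by norm_num), intervalIntegral.integral_of_le (by norm_num),
    ofReal_integral_eq_lintegral_ofReal, smul_eq_mul]
  · congr 1
    rw [one_div, ENNReal.ofReal_inv_of_pos (by norm_num)]
    norm_num
  · exact (hcont.intervalIntegrable 0 1).1
  · refine (ae_restrict_iff' measurableSet_Ioc).2 (Filter.Eventually.of_forall fun y hy => ?_)
    have : -1 ≤ min 1 (y + ε) := le_min (by norm_num) (by linarith [hy.1])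
    apply pow_nonneg
    linarith

lemma race_integral (n : ℕ) (ε a b : ℝ) :
    ∫ y in a..b, ((y + ε + 1) / 2) ^ n
      = 2 / ((n : ℝ) + 1) * (((b + ε + 1) / 2) ^ (n + 1) - ((a + ε + 1) / 2) ^ (n + 1)) := by
  have hn : (n : ℝ) + 1 ≠ 0 := by positivity
  rw [intervalIntegral.integral_eq_sub_of_hasDerivAt
    (f := fun y => 2 / ((n : ℝ) + 1) * ((y + ε + 1) / 2) ^ (n + 1))]
  · ring
  · intro y _
    have h := (((((hasDerivAt_id y).add_const ε).add_const 1).div_const 2).pow (n + 1)).const_mul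
      (2 / ((n : ℝ) + 1))
    have e : 2 / ((n : ℝ) + 1) * (((n + 1 : ℕ) : ℝ) * ((id y + ε + 1) / 2) ^ (n + 1 - 1) * (1 / 2))
        = ((y + ε + 1) / 2) ^ n := by
      rw [Nat.add_sub_cancel]
      simp only [id]
      push_cast
      field_simp
    rw [e] at h
    exact h
  · apply Continuous.intervalIntegrable
    fun_prop

/-- probability of winning the specialization race. Let `Y_1, …, Y_d`
be i.i.d. uniform on `[−1, 1]` (realized as the product of uniform probability measures
on `[−1,1]`). For the event `{Y_1 > 0 and Y_1 + ε ≥ Y_l for all l ≠ 1}`: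
for `d ≥ 2` and `ε ∈ [0,1]` its probability is `(1/d)(1 − ((1+ε)/2)^d) + ε/2`;
for `ε > 1` it is `1/2`; and for `−1 < ε < 0` it is
`(1/d)((1 + ε/2)^d − ((1+ε)/2)^d)`. -/
theorem stmt18 (d : ℕ) (hd : 1 ≤ d) (ε : ℝ) :
    let μ : Measure (Fin d → ℝ) :=
      Measure.pi fun _ => (2 : ENNReal)⁻¹ • volume.restrict (Set.Icc (-1 : ℝ) 1)
    let i0 : Fin d := ⟨0, hd⟩
    let event : Set (Fin d → ℝ) := {Y | 0 < Y i0 ∧ ∀ l, l ≠ i0 → Y l ≤ Y i0 + ε}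
    (2 ≤ d → 0 ≤ ε → ε ≤ 1 →
      μ event = ENNReal.ofReal ((1 / d) * (1 - ((1 + ε) / 2) ^ d) + ε / 2)) ∧
    (1 < ε → μ event = ENNReal.ofReal (1 / 2)) ∧
    (-1 < ε → ε < 0 →
      μ event = ENNReal.ofReal ((1 / d) * ((1 + ε / 2) ^ d - ((1 + ε) / 2) ^ d))) := by
  obtain ⟨n, rfl⟩ : ∃ n, d = n + 1 := ⟨d - 1, by omega⟩
  intro μ i0 event
  have key : -1 < ε → μ event = ENNReal.ofReal
      (1 / 2 * ∫ y in (0 : ℝ)..1, ((min 1 (y + ε) + 1) / 2) ^ n) := race_event n ε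
  have hn : (n : ℝ) + 1 ≠ 0 := by positivity
  have hcont : Continuous fun y : ℝ => ((min 1 (y + ε) + 1) / 2) ^ n := by fun_prop
  refine ⟨fun _ h0 h1 => ?_, fun h1 => ?_, fun h0 h1 => ?_⟩
  · rw [key (by linarith)]
    congr 1
    rw [← intervalIntegral.integral_add_adjacent_intervals
      (hcont.intervalIntegrable 0 (1 - ε)) (hcont.intervalIntegrable (1 - ε) 1)]
    have e1 : ∫ y in (0 : ℝ)..(1 - ε), ((min 1 (y + ε) + 1) / 2) ^ n
        = ∫ y in (0 : ℝ)..(1 - ε), ((y + ε + 1) / 2) ^ n := by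
      apply intervalIntegral.integral_congr
      intro y hy
      rw [Set.uIcc_of_le (by linarith)] at hy
      simp only
      rw [min_eq_right (by linarith [hy.2])]
    have e2 : ∫ y in (1 - ε)..1, ((min 1 (y + ε) + 1) / 2) ^ n
        = ∫ y in (1 - ε)..1, (1 : ℝ) := by
      apply intervalIntegral.integral_congr
      intro y hy
      rw [Set.uIcc_of_le (by linarith)] at hy
      simp only
      rw [min_eq_left (by linarith [hy.1])]
      norm_num
    rw [e1, e2, race_integral, intervalIntegral.integral_const]
    have : (1 - ε + ε + 1) / 2 = 1 := by ring
    rw [this, one_pow]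
    have : (0 + ε + 1) / 2 = (1 + ε) / 2 := by ring
    rw [this]
    push_cast
    simp only [smul_eq_mul]
    field_simp
    ring
  · rw [key (by linarith)]
    congr 1
    have e2 : ∫ y in (0 : ℝ)..1, ((min 1 (y + ε) + 1) / 2) ^ n
        = ∫ y in (0 : ℝ)..1, (1 : ℝ) := by
      apply intervalIntegral.integral_congr
      intro y hy
      rw [Set.uIcc_of_le (by linarith)] at hy
      simp only
      rw [min_eq_left (by linarith [hy.1])]
      norm_num
    rw [e2]
    simp
  · rw [key (by linarith)]
    congr 1
    have e1 : ∫ y in (0 : ℝ)..1, ((min 1 (y + ε) + 1) / 2) ^ n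
        = ∫ y in (0 : ℝ)..1, ((y + ε + 1) / 2) ^ n := by
      apply intervalIntegral.integral_congr
      intro y hy
      rw [Set.uIcc_of_le (by linarith)] at hy
      simp only
      rw [min_eq_right (by linarith [hy.2])]
    rw [e1, race_integral]
    have : (1 + ε + 1) / 2 = 1 + ε / 2 := by ring
    rw [this]
    have : (0 + ε + 1) / 2 = (1 + ε) / 2 := by ring
    rw [this]
    push_cast
    field_simp
end
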